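/- Let d ≥ 2, N > 2, and let L ≥ 2 be real; let α be an N×N irreducible skew-symmetric matrix with entries in {−1,0,1} and α_{1N} = 1. Let z₁, v ∈ Z_L^d ∖ {0} with z₁·v = 0 and Lz₁, Lv ∈ Z^d, and let p be a prime with p > 2·max(|Lz₁|_∞, |Lv|_∞). Then the N−2 polynomials q_j^{(p)} ∈ K[z₂,…,z_{N−1}], 1 < j < N, are linearly independent over K; in particular each q_j^{(p)} is a nonzero polynomial. -/

import Mathlib

/-!
In a relation `∑ c_j q_j = 0` let `S` be the set of `j` with `c_j ≠ 0`. The coefficient of a linear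
monomial is `c_j (α_{j1} a_i + α_{jN} b_i)`, so `α_{j1} a + α_{jN} b` vanishes modulo `p` for
`j ∈ S`. Its entries are smaller than `p`, so it vanishes over `ℤ`; the vectors `a` and `b` are
independent, being nonzero and orthogonal, so `α_{j1} = α_{jN} = 0`. For `j ∈ S` and `m ∉ S` the
coefficient of `z_{j,i} z_{m,i}` is then `c_j α_{jm}`, so `α_{jm} = 0` as well. Thus no nonzero
entry of `α` leads from `S` out of `S`, and irreducibility forces `S = ∅`.
-/

open MvPolynomial

noncomputable section

abbrev Ed (d : ℕ) := EuclideanSpace ℝ (Fin d)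

/-- the index `j+1 ∈ {2,…,N-1}` (1-based) of a middle variable, as an element of `Fin N`. -/
def embIdx (N : ℕ) (j : Fin (N - 2)) : Fin N := ⟨j.1 + 1, by have := j.2; omega⟩
/-- the first index (1-based index `1`). -/
def oneIdx (N : ℕ) (j : Fin (N - 2)) : Fin N := ⟨0, by have := j.2; omega⟩
/-- the last index (1-based index `N`). -/
def lastIdx (N : ℕ) (j : Fin (N - 2)) : Fin N := ⟨N - 1, by have := j.2; omega⟩

/-- irreducibility of a matrix: it cannot be brought by one and the same permutation of rows and
columns to a block-diagonal form with more than one block. -/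
def IrredMat {N : ℕ} (α : Matrix (Fin N) (Fin N) ℤ) : Prop :=
  ∀ I : Finset (Fin N), I.Nonempty → I ≠ Finset.univ → ∃ i ∈ I, ∃ j ∈ Iᶜ, α i j ≠ 0

/-- the polynomial `q_j^{(p)} = q_j(·; Lz₁, Lv) mod p`, viewed over the algebraic closure `K`
of `F_p`; here `a = Lz₁` and `bb = Lv` are the integer vectors. -/
def qpolyK (p : ℕ) [Fact p.Prime] (d N : ℕ) (α : Matrix (Fin N) (Fin N) ℤ)
    (a bb : Fin d → ℤ) (j : Fin (N - 2)) :
    MvPolynomial (Fin (N - 2) × Fin d) (AlgebraicClosure (ZMod p)) :=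
  ∑ i : Fin d, X (j, i) *
    (C ((α (embIdx N j) (oneIdx N j) * a i + α (embIdx N j) (lastIdx N j) * bb i : ℤ) :
        AlgebraicClosure (ZMod p)) +
      ∑ m : Fin (N - 2),
        C (((α (embIdx N j) (embIdx N m) -
            α (embIdx N j) (lastIdx N j) * α (oneIdx N j) (embIdx N m) : ℤ) :
          AlgebraicClosure (ZMod p))) * X (m, i))

section CoeffXMul

variable {R τ : Type*} [CommSemiring R] [DecidableEq τ]

lemma coeff_single_one_X_mul (s t : τ) (q : MvPolynomial τ R) :
    coeff (Finsupp.single s 1) (X t * q) = if t = s then coeff 0 q else 0 := by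
  rcases eq_or_ne t s with rfl | hts
  · simp [coeff_X_mul']
  · simp [coeff_X_mul', hts]

lemma coeff_single_one_add_single_one_X_mul {s s' : τ} (hs : s ≠ s') (t : τ)
    (q : MvPolynomial τ R) :
    coeff (Finsupp.single s 1 + Finsupp.single s' 1) (X t * q) =
      (if t = s then coeff (Finsupp.single s' 1) q else 0) +
        if t = s' then coeff (Finsupp.single s 1) q else 0 := by
  rcases eq_or_ne t s with rfl | hts
  · simp [coeff_X_mul', hs]
  rcases eq_or_ne t s' with rfl | hts'
  · simp [coeff_X_mul', hs.symm]
  · simp [coeff_X_mul', hts, hts']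

end CoeffXMul

section QuadPoly

variable {R σ ι : Type*} [CommSemiring R] [Fintype σ] [Fintype ι]

/-- The polynomial `z_j · (ℓ_j + ∑ m, B_{jm} z_m)` in vector variables `z_m ∈ R^ι`, the common shape
of the `q_j`. The scalar variable `(m, i)` is the `i`-th coordinate of `z_m`. -/
def quadPoly (ℓ : σ → ι → R) (B : Matrix σ σ R) (j : σ) : MvPolynomial (σ × ι) R :=
  ∑ i, X (j, i) * (C (ℓ j i) + ∑ m, C (B j m) * X (m, i))

lemma coeff_single_one_quadPoly [DecidableEq σ] (ℓ : σ → ι → R) (B : Matrix σ σ R)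
    (j k : σ) (i : ι) :
    coeff (Finsupp.single (j, i) 1) (quadPoly ℓ B k) = if k = j then ℓ j i else 0 := by
  classical
  rcases eq_or_ne k j with rfl | hkj
  · simp [quadPoly, coeff_sum, coeff_single_one_X_mul]
  · simp [quadPoly, coeff_sum, coeff_single_one_X_mul, hkj]

lemma coeff_single_one_add_single_one_quadPoly [DecidableEq σ] (ℓ : σ → ι → R) (B : Matrix σ σ R)
    {j m : σ} (hjm : j ≠ m) (k : σ) (i : ι) :
    coeff (Finsupp.single (j, i) 1 + Finsupp.single (m, i) 1) (quadPoly ℓ B k) =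
      (if k = j then B j m else 0) + if k = m then B m j else 0 := by
  classical
  have hji : (j, i) ≠ (m, i) := by simpa using hjm
  have hrow (n : σ) (i' : ι) :
      coeff (Finsupp.single (n, i) 1) (C (ℓ k i') + ∑ m', C (B k m') * X (m', i')) =
        if i' = i then B k n else 0 := by
    have hne : (0 : σ × ι →₀ ℕ) ≠ Finsupp.single (n, i) 1 :=
      (Finsupp.single_ne_zero.2 one_ne_zero).symm
    rcases eq_or_ne i' i with rfl | hi
    · simp [coeff_sum, coeff_X, coeff_C, Finsupp.single_left_inj, hne]
    · simp [coeff_sum, coeff_X, coeff_C, Finsupp.single_left_inj, hne, hi]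
  simp only [quadPoly, coeff_sum, coeff_single_one_add_single_one_X_mul hji, hrow]
  rcases eq_or_ne k j with rfl | hkj
  · simp [hjm]
  rcases eq_or_ne k m with rfl | hkm
  · simp [hkj]
  · simp [hkj, hkm]

theorem linearIndependent_quadPoly {R : Type*} [CommRing R] [NoZeroDivisors R] [Nonempty ι]
    {ℓ : σ → ι → R} {B : Matrix σ σ R}
    (h : ∀ S : Finset σ, S.Nonempty → (∀ j ∈ S, ∀ i, ℓ j i = 0) →
      ∃ j ∈ S, ∃ m ∉ S, B j m ≠ 0) :
    LinearIndependent R (quadPoly ℓ B) := by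
  classical
  rw [Fintype.linearIndependent_iff]
  intro c hc
  have hcoeff (e : σ × ι →₀ ℕ) : ∑ k, c k * coeff e (quadPoly ℓ B k) = 0 := by
    simpa only [coeff_sum, coeff_smul, smul_eq_mul, coeff_zero] using congrArg (coeff e) hc
  have hlinear (j : σ) (i : ι) : c j * ℓ j i = 0 := by
    simpa [coeff_single_one_quadPoly] using hcoeff (Finsupp.single (j, i) 1)
  have hmixed {j m : σ} (hjm : j ≠ m) : c j * B j m + c m * B m j = 0 := by
    obtain ⟨i⟩ := ‹Nonempty ι›
    have hji := hcoeff (Finsupp.single (j, i) 1 + Finsupp.single (m, i) 1)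
    simp only [coeff_single_one_add_single_one_quadPoly ℓ B hjm] at hji
    simpa [mul_add, Finset.sum_add_distrib] using hji
  by_contra! hne
  obtain ⟨j, hj, m, hm, hB⟩ := h {j | c j ≠ 0} (by simpa [Finset.Nonempty] using hne)
    fun j hj i => (mul_eq_zero.1 (hlinear j i)).resolve_left (Finset.mem_filter_univ j |>.1 hj)
  have hcj : c j ≠ 0 := by simpa using hj
  have hcm : c m = 0 := by simpa using hm
  have hjm : j ≠ m := by
    rintro rfl
    exact hm hj
  exact mul_ne_zero hcj hB (by simpa [hcm] using hmixed hjm)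

end QuadPoly

lemma eq_zero_and_eq_zero_of_intCast_mul_add_mul_eq_zero {K ι : Type*} [AddGroupWithOne K]
    {p : ℕ} [CharP K p] {a b : ι → ℤ}
    (hab : LinearIndependent ℤ ![a, b]) (hp : ∀ i, |a i| + |b i| < p) {s t : ℤ}
    (hs : |s| ≤ 1) (ht : |t| ≤ 1) (h : ∀ i, ((s * a i + t * b i : ℤ) : K) = 0) :
    s = 0 ∧ t = 0 := by
  refine LinearIndependent.pair_iff.1 hab s t (funext fun i => ?_)
  have hlt : |s * a i + t * b i| < p :=
    calc |s * a i + t * b i| ≤ |s| * |a i| + |t| * |b i| := by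
          simpa only [abs_mul] using abs_add_le (s * a i) (t * b i)
      _ ≤ 1 * |a i| + 1 * |b i| := by gcongr
      _ < p := by simpa only [one_mul] using hp i
  exact Int.eq_zero_of_abs_lt_dvd ((CharP.intCast_eq_zero_iff K p _).1 (h i)) hlt

lemma linearIndependent_pair_of_inner_eq_zero {𝕜 E : Type*} [RCLike 𝕜] [NormedAddCommGroup E]
    [InnerProductSpace 𝕜 E] {x y : E} (hx : x ≠ 0) (hy : y ≠ 0) (hxy : inner 𝕜 x y = 0) :
    LinearIndependent 𝕜 ![x, y] := by
  refine linearIndependent_of_ne_zero_of_inner_eq_zero (by simp [Fin.forall_fin_two, hx, hy]) ?_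
  simp [Pairwise, Fin.forall_fin_two, hxy, inner_eq_zero_symm.1 hxy]

lemma linearIndependent_int_of_eq_div {ι : Type*} {L : ℝ}
    {x y : EuclideanSpace ℝ ι} {a b : ι → ℤ}
    (hx : ∀ i, x i = a i / L) (hy : ∀ i, y i = b i / L) (hxy : LinearIndependent ℝ ![x, y]) :
    LinearIndependent ℤ ![a, b] := by
  refine LinearIndependent.pair_iff.2 fun s t hst => ?_
  have hrel : (s : ℝ) • x + (t : ℝ) • y = 0 := by
    ext i
    have hi : (s * a i + t * b i : ℝ) = 0 := by exact_mod_cast congrFun hst i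
    calc (s * x i + t * y i : ℝ) = (s * a i + t * b i) / L := by rw [hx, hy]; ring
      _ = 0 := by rw [hi, zero_div]
  exact_mod_cast LinearIndependent.pair_iff.1 hxy s t hrel

section MiddleIndices

variable {N : ℕ}

lemma embIdx_injective : Function.Injective (embIdx N) := fun j k h => by
  simpa [embIdx, Fin.ext_iff] using h

lemma embIdx_ne_oneIdx (j k : Fin (N - 2)) : embIdx N j ≠ oneIdx N k := by
  simp [embIdx, oneIdx]

lemma eq_oneIdx_or_eq_lastIdx_or_exists_eq_embIdx (j : Fin (N - 2)) (k : Fin N) :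
    k = oneIdx N j ∨ k = lastIdx N j ∨ ∃ m, k = embIdx N m := by
  by_cases hfirst : k.1 = 0
  · exact .inl (Fin.ext hfirst)
  by_cases hlast : k.1 = N - 1
  · exact .inr (.inl (Fin.ext hlast))
  · exact .inr (.inr ⟨⟨k.1 - 1, by omega⟩, Fin.ext (by simp only [embIdx]; omega)⟩)

lemma IrredMat.exists_embIdx_ne_zero {α : Matrix (Fin N) (Fin N) ℤ} (hα : IrredMat α)
    {S : Finset (Fin (N - 2))} (hS : S.Nonempty)
    (hends : ∀ j ∈ S, α (embIdx N j) (oneIdx N j) = 0 ∧ α (embIdx N j) (lastIdx N j) = 0) :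
    ∃ j ∈ S, ∃ m ∉ S, α (embIdx N j) (embIdx N m) ≠ 0 := by
  have hproper : S.map ⟨embIdx N, embIdx_injective⟩ ≠ Finset.univ := by
    obtain ⟨j₀, -⟩ := hS
    refine fun h => absurd (h ▸ Finset.mem_univ (oneIdx N j₀)) ?_
    simp [embIdx_ne_oneIdx]
  obtain ⟨i, hi, k, hk, hik⟩ := hα _ (hS.map (f := ⟨embIdx N, embIdx_injective⟩)) hproper
  obtain ⟨j, hj, rfl⟩ := Finset.mem_map.1 hi
  rcases eq_oneIdx_or_eq_lastIdx_or_exists_eq_embIdx j k with rfl | rfl | ⟨m, rfl⟩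
  · exact absurd (hends j hj).1 hik
  · exact absurd (hends j hj).2 hik
  · refine ⟨j, hj, m, fun hm => Finset.mem_compl.1 hk ?_, hik⟩
    exact Finset.mem_map_of_mem ⟨embIdx N, embIdx_injective⟩ hm

end MiddleIndices

section MiddlePoly

variable {N : ℕ} {ι : Type*}

/-- The coefficient of the `i`-th coordinate of `z_j` in `q_j(·; a, b)`. -/
def linearCoeff (α : Matrix (Fin N) (Fin N) ℤ) (a b : ι → ℤ) (j : Fin (N - 2)) (i : ι) : ℤ :=
  α (embIdx N j) (oneIdx N j) * a i + α (embIdx N j) (lastIdx N j) * b i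

/-- The matrix whose entry at `(j, m)` is the coefficient of `z_j · z_m` in `q_j`. -/
def quadCoeff (α : Matrix (Fin N) (Fin N) ℤ) : Matrix (Fin (N - 2)) (Fin (N - 2)) ℤ :=
  fun j m => α (embIdx N j) (embIdx N m) -
    α (embIdx N j) (lastIdx N j) * α (oneIdx N j) (embIdx N m)

variable [Fintype ι]

/-- The polynomial `q_j(·; a, b)` with its integer coefficients mapped to an arbitrary commutative
ring `K`; `qpolyK` is the case of the algebraic closure of `F_p`. -/
def qpoly (K : Type*) [CommRing K] (α : Matrix (Fin N) (Fin N) ℤ) (a b : ι → ℤ) :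
    Fin (N - 2) → MvPolynomial (Fin (N - 2) × ι) K :=
  quadPoly (fun j i => (linearCoeff α a b j i : K)) ((quadCoeff α).map (↑))

theorem statement17_general {K : Type*} [CommRing K] [IsDomain K] {p : ℕ} [CharP K p]
    {α : Matrix (Fin N) (Fin N) ℤ} (hα : ∀ i j, |α i j| ≤ 1) (hirr : IrredMat α)
    {a b : ι → ℤ} (hab : LinearIndependent ℤ ![a, b]) (hp : ∀ i, |a i| + |b i| < p) :
    LinearIndependent K (qpoly K α a b) := by
  have : Nonempty ι := (Function.ne_iff.1 (hab.ne_zero 0)).nonempty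
  refine linearIndependent_quadPoly fun S hS hlinear => ?_
  have hends (j) (hj : j ∈ S) :
      α (embIdx N j) (oneIdx N j) = 0 ∧ α (embIdx N j) (lastIdx N j) = 0 :=
    eq_zero_and_eq_zero_of_intCast_mul_add_mul_eq_zero hab hp (hα _ _) (hα _ _) (hlinear j hj)
  obtain ⟨j, hj, m, hm, hjm⟩ := hirr.exists_embIdx_ne_zero hS hends
  have hunit : IsUnit (α (embIdx N j) (embIdx N m)) :=
    Int.isUnit_iff_abs_eq.2 ((hα _ _).antisymm (Int.one_le_abs hjm))
  refine ⟨j, hj, m, hm, ?_⟩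
  rw [Matrix.map_apply, quadCoeff, (hends j hj).2, zero_mul, sub_zero]
  exact (hunit.map (Int.castRingHom K)).ne_zero

end MiddlePoly

lemma qpolyK_eq_qpoly (p : ℕ) [Fact p.Prime] (d N : ℕ) (α : Matrix (Fin N) (Fin N) ℤ)
    (a b : Fin d → ℤ) : qpolyK p d N α a b = qpoly (AlgebraicClosure (ZMod p)) α a b :=
  rfl

theorem statement17 (d N : ℕ) (hd : 2 ≤ d) (hN : 2 < N) (L : ℝ) (hL : 2 ≤ L)
    (α : Matrix (Fin N) (Fin N) ℤ) (hskew : α.transpose = -α)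
    (hentries : ∀ i j, α i j = -1 ∨ α i j = 0 ∨ α i j = 1)
    (hirr : IrredMat α) (hα1N : α ⟨0, by omega⟩ ⟨N - 1, by omega⟩ = 1)
    (z₁ v : Ed d) (a bb : Fin d → ℤ)
    (hz₁ : ∀ i, z₁ i = (a i : ℝ) / L) (hv : ∀ i, v i = (bb i : ℝ) / L)
    (hz0 : z₁ ≠ 0) (hv0 : v ≠ 0) (hdot : ∑ i, z₁ i * v i = 0)
    (p : ℕ) [Fact p.Prime]
    (hpa : ∀ i, 2 * |a i| < (p : ℤ)) (hpb : ∀ i, 2 * |bb i| < (p : ℤ)) :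
    LinearIndependent (AlgebraicClosure (ZMod p)) (fun j : Fin (N - 2) => qpolyK p d N α a bb j) ∧
      ∀ j : Fin (N - 2), qpolyK p d N α a bb j ≠ 0 := by
  have hα : ∀ i j, |α i j| ≤ 1 := fun i j => by
    rcases hentries i j with h | h | h <;> simp [h]
  have hinner : inner ℝ z₁ v = 0 := by simpa [PiLp.inner_apply, mul_comm] using hdot
  have hab : LinearIndependent ℤ ![a, bb] :=
    linearIndependent_int_of_eq_div hz₁ hv
      (linearIndependent_pair_of_inner_eq_zero hz0 hv0 hinner)
  have hli := statement17_general (K := AlgebraicClosure (ZMod p)) hα hirr hab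
    fun i => by linarith [hpa i, hpb i]
  rw [← qpolyK_eq_qpoly] at hli
  exact ⟨hli, hli.ne_zero⟩
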